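/- arXiv:1507.06763 — 3 statements merged into one kernel-verified Lean document; each statement's English description precedes it below -/
import Mathlib

section
/- In dimension d = 1, for every threshold k ≥ 1, radius r > 0, and database size N ≥ 2k + 1, the global sensitivity of the outlier-count query equals 2k + 1: for all databases X, X' of size N in ℝ with H(X,X') = 1 one has |q_count(X,k,r) − q_count(X',k,r)| ≤ 2k + 1, and there exists such a pair attaining the value 2k + 1. -/
open Finset
open scoped Classical

noncomputable section

/-- A point of `ℝ^d`. -/
abbrev Pt (d : ℕ) := EuclideanSpace ℝ (Fin d)

/-- Hamming distance between two databases of size `N`: the number of differing records. -/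
def hamming {N d : ℕ} (X X' : Fin N → Pt d) : ℕ :=
  (univ.filter fun i => X i ≠ X' i).card

/-- The degree of record `i` in `X`: the number of other records within distance `r`. -/
def deg {N d : ℕ} (X : Fin N → Pt d) (r : ℝ) (i : Fin N) : ℕ :=
  (univ.filter fun j => j ≠ i ∧ ‖X j - X i‖ ≤ r).card

/-- The number of outlier records: records with fewer than `k` neighbors within radius `r`. -/
def qCount {N d : ℕ} (X : Fin N → Pt d) (k : ℕ) (r : ℝ) : ℕ :=
  (univ.filter fun i => deg X r i < k).card

/-!
Let one record move to a point `x`. Another outlier can lose its status only if it lies in the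
closed `r`-ball about `x`, and pairwise `r`-close outliers number at most `k`. So if `m` sets of
diameter at most `r` cover an `r`-ball, then at most `m * k` other records lose their status, plus
possibly the moving record itself.

Conversely, let `m` points of the closed `r`-ball about the origin be at pairwise distance more
than `r`, put `k` records at each of them, one record far away and the remaining ones farther still.
Each of the `m * k + 1` records outside the remote pile has at most `k - 1` neighbors; moving the
lone far record to the origin gives each of them at least `k`.

On the line both bounds apply with `m = 2`: an interval of length `2r` splits into two halves, and
its endpoints are `2r > r` apart.
-/

section Degree

variable {N d k : ℕ} {r : ℝ} {X X' : Fin N → Pt d}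

lemma deg_add_one (hr : 0 ≤ r) (X : Fin N → Pt d) (i : Fin N) :
    deg X r i + 1 = #{j | dist (X j) (X i) ≤ r} := by
  have hself : i ∈ ({j | dist (X j) (X i) ≤ r} : Finset (Fin N)) := by simpa using hr
  rw [← card_erase_add_one hself, deg]
  congr 2
  ext j
  simp [dist_eq_norm]

lemma deg_lt_iff_card_le (hr : 0 ≤ r) (X : Fin N → Pt d) (i : Fin N) :
    deg X r i < k ↔ #{j | dist (X j) (X i) ≤ r} ≤ k := by
  rw [← deg_add_one hr, Nat.succ_le_iff]

lemma card_le_of_outliers_of_dist_le {S : Finset (Fin N)} (hout : ∀ i ∈ S, deg X r i < k)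
    (hclose : ∀ i ∈ S, ∀ j ∈ S, dist (X i) (X j) ≤ r) : #S ≤ k := by
  obtain rfl | ⟨i, hi⟩ := S.eq_empty_or_nonempty
  · simp
  have hr : 0 ≤ r := dist_nonneg.trans (hclose i hi i hi)
  calc #S ≤ #{j | dist (X j) (X i) ≤ r} := card_le_card fun j hj ↦ by simpa using hclose j hj i hi
    _ ≤ k := (deg_lt_iff_card_le hr X i).1 (hout i hi)

lemma deg_le_deg_of_eq_off_of_lt_dist {a i : Fin N} (h : ∀ j ≠ a, X j = X' j) (hia : i ≠ a)
    (hfar : r < dist (X i) (X' a)) : deg X' r i ≤ deg X r i := by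
  refine card_le_card fun j ↦ ?_
  simp only [mem_filter, mem_univ, true_and, ← dist_eq_norm, ← h i hia]
  intro hj
  have hja : j ≠ a := by
    rintro rfl
    rw [dist_comm] at hfar
    exact hfar.not_ge hj.2
  rwa [h j hja]

lemma exists_eq_off_of_hamming_eq_one (h : hamming X X' = 1) : ∃ a, ∀ j ≠ a, X j = X' j := by
  obtain ⟨a, ha⟩ := card_eq_one.1 h
  refine ⟨a, fun j hj ↦ not_not.1 fun hne ↦ hj ?_⟩
  rw [← mem_singleton, ← ha]
  simpa using hne

end Degree

section Covering

variable {N d : ℕ} {r : ℝ} {X X' : Fin N → Pt d} {ι : Type*} [Fintype ι] {A : ι → Set (Pt d)}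

lemma qCount_le_add_of_cover (k : ℕ) (hdiam : ∀ s, ∀ x ∈ A s, ∀ y ∈ A s, dist x y ≤ r)
    (hcover : Metric.closedBall 0 r ⊆ ⋃ s, A s) {a : Fin N} (h : ∀ j ≠ a, X j = X' j) :
    qCount X k r ≤ qCount X' k r + (Fintype.card ι * k + 1) := by
  let near (s : ι) : Finset (Fin N) := {i | deg X r i < k ∧ X i - X' a ∈ A s}
  have hnear (s : ι) : #(near s) ≤ k := by
    refine card_le_of_outliers_of_dist_le (X := X) (fun i hi ↦ (mem_filter.1 hi).2.1) ?_
    intro i hi j hj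
    rw [← dist_sub_right _ _ (X' a)]
    exact hdiam s _ (mem_filter.1 hi).2.2 _ (mem_filter.1 hj).2.2
  have hsub : ({i | deg X r i < k} : Finset (Fin N)) ⊆
      ({i | deg X' r i < k} : Finset (Fin N)) ∪ insert a (univ.biUnion near) := by
    intro i hi
    have hi : deg X r i < k := (mem_filter.1 hi).2
    by_cases hi' : deg X' r i < k
    · simp [hi']
    by_cases hia : i = a
    · simp [hia]
    have hclose : dist (X i) (X' a) ≤ r := not_lt.1 fun hfar ↦
      hi' ((deg_le_deg_of_eq_off_of_lt_dist h hia hfar).trans_lt hi)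
    have hball : X i - X' a ∈ Metric.closedBall 0 r := by
      rwa [mem_closedBall_zero_iff, ← dist_eq_norm]
    obtain ⟨s, hs⟩ := Set.mem_iUnion.1 (hcover hball)
    exact mem_union_right _ (mem_insert_of_mem
      (mem_biUnion.2 ⟨s, mem_univ s, mem_filter.2 ⟨mem_univ i, hi, hs⟩⟩))
  calc qCount X k r
      ≤ #(({i | deg X' r i < k} : Finset (Fin N)) ∪ insert a (univ.biUnion near)) :=
        card_le_card hsub
    _ ≤ qCount X' k r + #(insert a (univ.biUnion near)) := card_union_le _ _
    _ ≤ qCount X' k r + (#(univ.biUnion near) + 1) := by gcongr; exact card_insert_le _ _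
    _ ≤ qCount X' k r + (Fintype.card ι * k + 1) := by
      gcongr
      exact card_biUnion_le_card_mul _ _ _ fun s _ ↦ hnear s

lemma abs_qCount_sub_le_of_cover (k : ℕ) (hdiam : ∀ s, ∀ x ∈ A s, ∀ y ∈ A s, dist x y ≤ r)
    (hcover : Metric.closedBall 0 r ⊆ ⋃ s, A s) (h : hamming X X' = 1) :
    |(qCount X k r : ℤ) - (qCount X' k r : ℤ)| ≤ Fintype.card ι * k + 1 := by
  obtain ⟨a, ha⟩ := exists_eq_off_of_hamming_eq_one h
  have hle := qCount_le_add_of_cover k hdiam hcover ha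
  have hge := qCount_le_add_of_cover k hdiam hcover fun j hj ↦ (ha j hj).symm
  zify at hle hge
  rw [abs_sub_le_iff]
  constructor <;> linarith

end Covering

section Packing

section Fibers

variable {ι : Type*} [Fintype ι] [DecidableEq ι] {N : ℕ}

lemma exists_card_fiber_eq {n : ι → ℕ} (hn : ∑ s, n s = N) :
    ∃ f : Fin N → ι, ∀ s, #{i | f i = s} = n s := by
  let e : Fin N ≃ Σ s, Fin (n s) := (Fintype.equivFinOfCardEq (by simpa using hn)).symm
  refine ⟨fun i ↦ (e i).1, fun s ↦ ?_⟩
  have hfiber : ({x | x.1 = s} : Finset (Σ s, Fin (n s))) =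
      univ.map (Function.Embedding.sigmaMk s) := by
    ext ⟨t, x⟩
    simp only [mem_filter, mem_univ, true_and, mem_map, Function.Embedding.sigmaMk_apply]
    constructor
    · rintro rfl
      exact ⟨x, rfl⟩
    · rintro ⟨y, hy⟩
      exact (congrArg Sigma.fst hy).symm
  calc #{i | (e i).1 = s} = #{x : Σ s, Fin (n s) | x.1 = s} := card_equiv e (by simp)
    _ = n s := by rw [hfiber, card_map, card_univ, Fintype.card_fin]

lemma card_filter_comp (f : Fin N → ι) (P : ι → Prop) [DecidablePred P] :
    #{i | P (f i)} = ∑ s, if P s then #{i | f i = s} else 0 := by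
  rw [← sum_filter, sum_card_fiberwise_eq_card_filter]
  simp

lemma qCount_comp {d : ℕ} {r : ℝ} (hr : 0 ≤ r) (k : ℕ) (p : ι → Pt d) (f : Fin N → ι) :
    qCount (p ∘ f) k r =
      ∑ s, if (∑ t, if dist (p t) (p s) ≤ r then #{i | f i = t} else 0) ≤ k
        then #{i | f i = s} else 0 := by
  rw [← card_filter_comp]
  simp only [qCount, deg_lt_iff_card_le hr, Function.comp_apply, ← card_filter_comp]

end Fibers

variable {ι : Type*}

/-- `Option (Option ι)` encodes the sites of the extremal configuration: `none` is the site of the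
moving record, `some none` that of the remote pile, and `some (some s)` that of the cluster `s`.
The function `siteFun x y p` takes the values `x`, `y` and `p s` there; it serves both for the
positions of the sites and for the numbers of records at them. -/
def siteFun {α : Type*} (x y : α) (p : ι → α) : Option (Option ι) → α
  | none => x
  | some none => y
  | some (some s) => p s

variable {N d k w : ℕ} {r : ℝ} {p : ι → Pt d} {x u v : Pt d} {f : Fin N → Option (Option ι)}

lemma hamming_siteFun_comp (hux : u ≠ x) (hf : #{i | f i = none} = 1) :
    hamming (siteFun u v p ∘ f) (siteFun x v p ∘ f) = 1 := by
  rw [← hf, hamming]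
  refine congrArg card (filter_congr fun i _ ↦ ?_)
  rcases hi : f i with _ | _ | s <;> simp [siteFun, hi, hux]

lemma qCount_siteFun_comp_of_isolated [Fintype ι]
    (hf : ∀ s, #{i | f i = s} = siteFun 1 w (fun _ ↦ k) s) (hr : 0 ≤ r) (hk : 1 ≤ k)
    (hsep : Pairwise fun s t ↦ r < dist (p s) (p t)) (hpv : ∀ s, r < dist (p s) v)
    (hpu : ∀ s, r < dist (p s) u) (huv : r < dist u v) :
    qCount (siteFun u v p ∘ f) k r =
      (if w ≤ k then w else 0) + (Fintype.card ι * k + 1) := by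
  have hcluster (s t : ι) : dist (p t) (p s) ≤ r ↔ t = s :=
    ⟨fun h ↦ not_not.1 fun hts ↦ (hsep hts).not_ge h, by rintro rfl; simpa using hr⟩
  -- Each site sees only itself: `1` record at the lone site and `k` at a cluster, all outliers.
  simp [qCount_comp hr, hf, Fintype.sum_option, siteFun, hcluster, (hpv _).not_ge, (hpu _).not_ge,
    huv.not_ge, dist_comm v, dist_comm u (p _), hr, hk, add_assoc, add_comm, add_left_comm]

lemma qCount_siteFun_comp_of_dist_le [Finite ι] [Nonempty ι]
    (hf : ∀ s, #{i | f i = s} = siteFun 1 w (fun _ ↦ k) s)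
    (hpv : ∀ s, r < dist (p s) v) (hpx : ∀ s, dist (p s) x ≤ r) (hxv : r < dist x v) :
    qCount (siteFun x v p ∘ f) k r = if w ≤ k then w else 0 := by
  cases nonempty_fintype ι
  have hr : 0 ≤ r := dist_nonneg.trans (hpx (Classical.arbitrary ι))
  -- The moving record sees every cluster, and each cluster sees itself and the moving record.
  have hcenter : k < 1 + Fintype.card ι * k :=
    Nat.lt_one_add_iff.2 (Nat.le_mul_of_pos_left k Fintype.card_pos)
  have hcluster (s : ι) : k < 1 + ∑ t, if dist (p t) (p s) ≤ r then k else 0 := by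
    have hself := single_le_sum_of_canonicallyOrdered
      (f := fun t ↦ if dist (p t) (p s) ≤ r then k else 0) (mem_univ s)
    simp only [dist_self, hr, if_true] at hself
    omega
  simp [qCount_comp hr, hf, Fintype.sum_option, siteFun, (hpv _).not_ge, hpx, hxv.not_ge,
    dist_comm v, dist_comm x (p _), hr, hcenter.not_ge, (hcluster _).not_ge]

lemma exists_qCount_eq_add_of_packing [NeZero d] [Fintype ι] [Nonempty ι]
    (hk : 1 ≤ k) (hN : Fintype.card ι * k + 1 ≤ N) (hball : ∀ s, ‖p s‖ ≤ r)
    (hsep : Pairwise fun s t ↦ r < dist (p s) (p t)) :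
    ∃ X X' : Fin N → Pt d, hamming X X' = 1 ∧
      qCount X k r = qCount X' k r + (Fintype.card ι * k + 1) := by
  have hr : 0 ≤ r := (norm_nonneg _).trans (hball (Classical.arbitrary ι))
  obtain ⟨u, hu⟩ := NormedSpace.exists_lt_norm ℝ (Pt d) (2 * r)
  obtain ⟨v, hv⟩ := NormedSpace.exists_lt_norm ℝ (Pt d) (‖u‖ + r)
  have lt_dist_of_norm {x y : Pt d} (h : ‖x‖ + r < ‖y‖) : r < dist x y := by
    rw [dist_comm, dist_eq_norm]
    linarith [norm_sub_norm_le y x]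
  obtain ⟨f, hf⟩ := exists_card_fiber_eq (N := N)
    (n := siteFun 1 (N - (Fintype.card ι * k + 1)) fun _ : ι ↦ k)
    (by simpa [Fintype.sum_option, siteFun] using by omega)
  have hpv (s : ι) : r < dist (p s) v := lt_dist_of_norm (by linarith [hball s])
  refine ⟨siteFun u v p ∘ f, siteFun 0 v p ∘ f,
    hamming_siteFun_comp (norm_pos_iff.1 (by linarith)) (hf none), ?_⟩
  rw [qCount_siteFun_comp_of_isolated hf hr hk hsep hpv
      (fun s ↦ lt_dist_of_norm (by linarith [hball s])) (lt_dist_of_norm hv),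
    qCount_siteFun_comp_of_dist_le hf hpv (by simpa using hball)
      (lt_dist_of_norm (by linarith [norm_zero (E := Pt d)]))]

end Packing

section DimOne

variable {r : ℝ}

lemma dist_eq_abs_dim_one (x y : Pt 1) : dist x y = |x 0 - y 0| := by
  simp [EuclideanSpace.dist_eq, Real.sqrt_sq_eq_abs, Real.dist_eq]

/-- The two halves of the closed interval of radius `r` about the origin of `Pt 1`, indexed by
`Bool` so as to form a family. -/
def halfInterval (r : ℝ) (b : Bool) : Set (Pt 1) :=
  {x | x 0 ∈ if b then Set.Icc 0 r else Set.Icc (-r) 0}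

lemma dist_le_of_mem_halfInterval {b : Bool} {x y : Pt 1} (hx : x ∈ halfInterval r b)
    (hy : y ∈ halfInterval r b) : dist x y ≤ r := by
  rw [dist_eq_abs_dim_one, ← Real.dist_eq]
  cases b
  · exact (Real.dist_le_of_mem_Icc hx hy).trans_eq (by ring)
  · exact (Real.dist_le_of_mem_Icc hx hy).trans_eq (by ring)

lemma closedBall_subset_iUnion_halfInterval :
    Metric.closedBall 0 r ⊆ ⋃ b, halfInterval r b := by
  intro x hx
  rw [Metric.mem_closedBall, dist_eq_abs_dim_one, PiLp.zero_apply, sub_zero, abs_le] at hx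
  rw [Set.mem_iUnion]
  rcases le_total 0 (x 0) with h | h
  · exact ⟨true, h, hx.2⟩
  · exact ⟨false, hx.1, h⟩

/-- The endpoints of the interval `halfInterval r false ∪ halfInterval r true`. -/
def endpoint (r : ℝ) (b : Bool) : Pt 1 :=
  EuclideanSpace.single 0 (if b then r else -r)

lemma norm_endpoint (hr : 0 ≤ r) (b : Bool) : ‖endpoint r b‖ = r := by
  cases b <;> simp [endpoint, abs_of_nonneg hr]

lemma dist_endpoint_of_ne (hr : 0 ≤ r) {b c : Bool} (hbc : b ≠ c) :
    dist (endpoint r b) (endpoint r c) = 2 * r := by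
  have hdiff : |r - -r| = 2 * r := by rw [sub_neg_eq_add, ← two_mul, abs_of_nonneg (by positivity)]
  cases b <;> cases c
  · exact absurd rfl hbc
  · simpa [endpoint, Real.dist_eq, abs_sub_comm] using hdiff
  · simpa [endpoint, Real.dist_eq] using hdiff
  · exact absurd rfl hbc

end DimOne

/-- In dimension `d = 1`, the global sensitivity of the outlier-count query equals `2k + 1`:
every neighboring pair differs by at most `2k + 1`, and some pair attains this value. -/
theorem global_sensitivity_dim_one
    (N k : ℕ) (hk : 1 ≤ k) (r : ℝ) (hr : 0 < r) (hN : 2 * k + 1 ≤ N) :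
    (∀ X X' : Fin N → Pt 1, hamming X X' = 1 →
      |(qCount X k r : ℤ) - (qCount X' k r : ℤ)| ≤ 2 * k + 1) ∧
    (∃ X X' : Fin N → Pt 1, hamming X X' = 1 ∧
      |(qCount X k r : ℤ) - (qCount X' k r : ℤ)| = 2 * k + 1) := by
  constructor
  · intro X X' h
    simpa [mul_comm] using abs_qCount_sub_le_of_cover k
      (fun _ _ hx _ hy ↦ dist_le_of_mem_halfInterval hx hy)
      closedBall_subset_iUnion_halfInterval h
  · have hsep : Pairwise fun b c ↦ r < dist (endpoint r b) (endpoint r c) := fun b c hbc ↦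
      (by linarith : r < 2 * r).trans_eq (dist_endpoint_of_ne hr.le hbc).symm
    obtain ⟨X, X', hXX', hcount⟩ := exists_qCount_eq_add_of_packing hk (by simpa using hN)
      (fun b ↦ (norm_endpoint hr.le b).le) hsep
    refine ⟨X, X', hXX', ?_⟩
    rw [hcount, Fintype.card_bool]
    push_cast
    rw [add_sub_cancel_left, abs_of_nonneg (by positivity)]
end
end

section
/- For every database X of size N in ℝ^d and every database X' of size N with Hamming distance H(X,X') = 1, |q_count(X,k,r) − q_count(X',k,r)| ≤ max( max_{i} |CV(X, X i, k, r)| , sup_{x ∈ ℝ^d} |CV(X, x, k−1, r)| ) + 1, where the first maximum ranges over all record indices i of X. (Upper bound on the local sensitivity of the outlier-count query.) -/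
open Finset
open scoped Classical

noncomputable section

/-- `V(X,m,r)`: the set of record indices of degree exactly `m` (empty for `m < 0`). -/
def Vset {N d : ℕ} (X : Fin N → Pt d) (r : ℝ) (m : ℤ) : Finset (Fin N) :=
  univ.filter fun i => (deg X r i : ℤ) = m

/-- `CV(X,x,m,r)`: the set of degree-`m` record indices within distance `r` of `x`
(empty for `m < 0`). -/
def CV {N d : ℕ} (X : Fin N → Pt d) (x : Pt d) (m : ℤ) (r : ℝ) : Finset (Fin N) :=
  (Vset X r m).filter fun i => ‖X i - x‖ ≤ r

/-!
Join two records of a database by an edge when they are within distance `r`; the degree of a record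
is then its degree in this graph, and replacing record `p` only affects edges at `p`. So the degree
of any other record `v` changes by at most one, and `v` becomes a non-outlier only if it becomes
adjacent to `p` while its degree goes from `k - 1` to `k`. Replacing `X p` by `X' p`, the records
that stop being outliers have degree `k - 1` in `X` and lie near `X' p`, an arbitrary point of the
space; replacing `X' p` back by `X p`, they have degree `k` in `X` and lie near `X p`, a record of
`X`. The summand `1` accounts for `p` itself.
-/

section Graph

variable {V : Type*} {G H : SimpleGraph V} {p v : V} {k : ℕ}

lemma erase_neighborFinset_congr [DecidableEq V]
    [Fintype (G.neighborSet v)] [Fintype (H.neighborSet v)]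
    (hGH : G.deleteIncidenceSet p = H.deleteIncidenceSet p) (hv : v ≠ p) :
    (G.neighborFinset v).erase p = (H.neighborFinset v).erase p := by
  ext w
  have hadj := congr_fun₂ (congrArg SimpleGraph.Adj hGH) v w
  simpa [SimpleGraph.deleteIncidenceSet_adj, hv, and_comm] using hadj

lemma adj_and_degree_eq_of_degree_lt_of_le_degree
    [Fintype (G.neighborSet v)] [Fintype (H.neighborSet v)]
    (hGH : G.deleteIncidenceSet p = H.deleteIncidenceSet p) (hv : v ≠ p)
    (hG : G.degree v < k) (hH : k ≤ H.degree v) :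
    H.Adj v p ∧ G.degree v + 1 = k ∧ H.degree v = k := by
  have hle : #((H.neighborFinset v).erase p) ≤ G.degree v :=
    erase_neighborFinset_congr hGH hv ▸ card_erase_le
  have hmem : p ∈ H.neighborFinset v := by
    by_contra hp
    rw [erase_eq_of_notMem hp, H.card_neighborFinset_eq_degree] at hle
    omega
  have hcard : #((H.neighborFinset v).erase p) + 1 = H.degree v := card_erase_add_one hmem
  exact ⟨(H.mem_neighborFinset v p).mp hmem, by omega, by omega⟩

lemma card_degree_lt_le_add [Fintype V] [DecidableRel G.Adj] [DecidableRel H.Adj]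
    (hGH : G.deleteIncidenceSet p = H.deleteIncidenceSet p) (k : ℕ) :
    #{v | G.degree v < k} ≤
      #{v | H.degree v < k} + #{v | H.Adj v p ∧ G.degree v + 1 = k ∧ H.degree v = k} + 1 := by
  set S : Finset V := {v | H.degree v < k}
  set C : Finset V := {v | H.Adj v p ∧ G.degree v + 1 = k ∧ H.degree v = k}
  have hsub : ({v | G.degree v < k} : Finset V) ⊆ insert p (S ∪ C) := by
    intro v hv
    simp only [mem_filter_univ, mem_insert, mem_union, S, C] at hv ⊢
    by_cases hvp : v = p
    · exact .inl hvp
    · exact .inr ((lt_or_ge (H.degree v) k).imp_right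
        (adj_and_degree_eq_of_degree_lt_of_le_degree hGH hvp hv))
  calc #{v | G.degree v < k} ≤ #(insert p (S ∪ C)) := card_le_card hsub
    _ ≤ #(S ∪ C) + 1 := card_insert_le _ _
    _ ≤ #S + #C + 1 := by gcongr; exact card_union_le S C

end Graph

section ProximityGraph

variable {ι α : Type*} [PseudoMetricSpace α] {X X' : ι → α} {r : ℝ} {p : ι}

/-- The graph on the record indices of a database `X` whose edges join distinct records at distance
at most `r`. Coinciding records are distinct vertices, so that `deg X r i` is the degree of `i`. -/
def proximityGraph (X : ι → α) (r : ℝ) : SimpleGraph ι where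
  Adj i j := i ≠ j ∧ dist (X i) (X j) ≤ r
  symm := ⟨fun i j h => ⟨h.1.symm, dist_comm (X i) (X j) ▸ h.2⟩⟩
  loopless := ⟨fun _ h => h.1 rfl⟩

lemma proximityGraph_adj {i j : ι} :
    (proximityGraph X r).Adj i j ↔ i ≠ j ∧ dist (X i) (X j) ≤ r :=
  Iff.rfl

lemma deleteIncidenceSet_proximityGraph_congr (h : ∀ i ≠ p, X i = X' i) :
    (proximityGraph X r).deleteIncidenceSet p = (proximityGraph X' r).deleteIncidenceSet p := by
  ext i j
  simp only [SimpleGraph.deleteIncidenceSet_adj, proximityGraph_adj]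
  refine and_congr_left fun ⟨hi, hj⟩ => ?_
  rw [h i hi, h j hj]

variable [Fintype ι]

/-- The analogue of `CV X x m r` for a database in a pseudometric space: the records at distance at
most `r` from `x` that have degree `m` in the proximity graph. The degree `m` is an integer, as in
`CV`, so that `m = k - 1` is not truncated. -/
def nearDegreeEq (X : ι → α) (x : α) (m : ℤ) (r : ℝ) : Finset ι :=
  {i | ((proximityGraph X r).degree i : ℤ) = m ∧ dist (X i) x ≤ r}

lemma card_degree_lt_le_add_nearDegreeEq_sub_one (h : ∀ i ≠ p, X i = X' i) (k : ℕ) :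
    #{i | (proximityGraph X r).degree i < k} ≤
      #{i | (proximityGraph X' r).degree i < k} + #(nearDegreeEq X (X' p) (k - 1) r) + 1 := by
  refine (card_degree_lt_le_add (deleteIncidenceSet_proximityGraph_congr h) k).trans ?_
  gcongr
  intro i hi
  obtain ⟨⟨hip, hdist⟩, hdeg, -⟩ := (mem_filter_univ i).mp hi
  exact (mem_filter_univ i).mpr ⟨by omega, by rwa [h i hip]⟩

lemma card_degree_lt_le_add_nearDegreeEq (h : ∀ i ≠ p, X i = X' i) (k : ℕ) :
    #{i | (proximityGraph X' r).degree i < k} ≤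
      #{i | (proximityGraph X r).degree i < k} + #(nearDegreeEq X (X p) k r) + 1 := by
  refine (card_degree_lt_le_add (deleteIncidenceSet_proximityGraph_congr h).symm k).trans ?_
  gcongr
  intro i hi
  obtain ⟨⟨-, hdist⟩, -, hdeg⟩ := (mem_filter_univ i).mp hi
  exact (mem_filter_univ i).mpr ⟨by rw [hdeg], hdist⟩

lemma bddAbove_range_card_nearDegreeEq (X : ι → α) (m : ℤ) (r : ℝ) :
    BddAbove (Set.range fun x => #(nearDegreeEq X x m r)) :=
  ⟨Fintype.card ι, Set.forall_mem_range.mpr fun _ => card_le_univ _⟩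

end ProximityGraph

lemma exists_forall_ne_eq_of_hammingDist_eq_one {ι : Type*} {β : ι → Type*} [Fintype ι]
    [∀ i, DecidableEq (β i)] {x y : ∀ i, β i} (h : hammingDist x y = 1) :
    ∃ p, ∀ i ≠ p, x i = y i := by
  obtain ⟨p, hp⟩ := card_eq_one.mp h
  refine ⟨p, fun i hi => ?_⟩
  by_contra hne
  exact hi (mem_singleton.mp (hp ▸ (mem_filter_univ i).mpr hne))

theorem local_sensitivity_upper_bound_general {ι α : Type*} [Fintype ι] [PseudoMetricSpace α]
    [DecidableEq α] (k : ℕ) (r : ℝ) {X X' : ι → α} (h : hammingDist X X' = 1) :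
    |(#{i | (proximityGraph X r).degree i < k} : ℤ) - #{i | (proximityGraph X' r).degree i < k}| ≤
      max ((univ.sup fun i => #(nearDegreeEq X (X i) k r) : ℕ) : ℤ)
        ((⨆ x, #(nearDegreeEq X x (k - 1) r) : ℕ) : ℤ) + 1 := by
  obtain ⟨p, hp⟩ := exists_forall_ne_eq_of_hammingDist_eq_one h
  have hloss := card_degree_lt_le_add_nearDegreeEq_sub_one (r := r) hp k
  have hgain := card_degree_lt_le_add_nearDegreeEq (r := r) hp k
  have hmax : #(nearDegreeEq X (X p) k r) ≤ univ.sup fun i => #(nearDegreeEq X (X i) k r) :=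
    le_sup (f := fun i => #(nearDegreeEq X (X i) k r)) (mem_univ p)
  have hsup : #(nearDegreeEq X (X' p) (k - 1) r) ≤ ⨆ x, #(nearDegreeEq X x (k - 1) r) :=
    le_ciSup (bddAbove_range_card_nearDegreeEq X (k - 1) r) (X' p)
  rw [abs_le]
  constructor <;> omega

section Euclidean

variable {N d : ℕ} (X X' : Fin N → Pt d)

lemma hamming_eq_hammingDist : hamming X X' = hammingDist X X' := by
  simp only [hamming, hammingDist]

lemma deg_eq_degree_proximityGraph (r : ℝ) (i : Fin N) :
    deg X r i = (proximityGraph X r).degree i := by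
  rw [deg, ← SimpleGraph.card_neighborFinset_eq_degree]
  congr 1
  ext j
  simp [proximityGraph_adj, dist_eq_norm, norm_sub_rev, eq_comm]

lemma CV_eq_nearDegreeEq (x : Pt d) (m : ℤ) (r : ℝ) : CV X x m r = nearDegreeEq X x m r := by
  ext i
  simp [CV, Vset, nearDegreeEq, deg_eq_degree_proximityGraph, dist_eq_norm]

end Euclidean

/-- Upper bound on the local sensitivity of the outlier-count query:
for any neighbor `X'` of `X`, the change in the outlier count is at most
`max( max_i |CV(X, X i, k, r)|, sup_{x ∈ ℝ^d} |CV(X, x, k−1, r)| ) + 1`. -/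
theorem local_sensitivity_upper_bound
    (d N k : ℕ) (hd : 1 ≤ d) (hk : 1 ≤ k) (r : ℝ) (hr : 0 < r)
    (X X' : Fin N → Pt d) (hH : hamming X X' = 1) :
    |(qCount X k r : ℤ) - (qCount X' k r : ℤ)| ≤
      max ((((univ : Finset (Fin N)).sup fun i => (CV X (X i) (k : ℤ) r).card : ℕ)) : ℤ)
        ((sSup {n : ℕ | ∃ x : Pt d, n = (CV X x ((k : ℤ) - 1) r).card} : ℕ) : ℤ) + 1 := by
  simpa only [qCount, deg_eq_degree_proximityGraph, CV_eq_nearDegreeEq, iSup, Set.range, eq_comm]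
    using local_sensitivity_upper_bound_general k r ((hamming_eq_hammingDist X X').symm.trans hH)
end
end

section
/- Let t ≥ 0 be an integer, and let X and X_t be databases of size N in ℝ^d with Hamming distance H(X,X_t) = t. Then for every x ∈ ℝ^d and every threshold k ≥ 1, |CV(X_t, x, k, r)| ≤ |⋃_{j ≥ 0, |j−k| ≤ t} CV(X, x, j, r)| + t. -/
open Finset
open scoped Classical

noncomputable section

/-- The union `⋃_{j ≥ 0, |j−m| ≤ t} CV(X,x,j,r)` (terms with `j < 0` are empty). -/
def CVUnion {N d : ℕ} (X : Fin N → Pt d) (x : Pt d) (m : ℤ) (t : ℕ) (r : ℝ) :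
    Finset (Fin N) :=
  (Finset.Icc (m - t) (m + t)).biUnion fun j => CV X x j r

/-- `C^{(t)}(X,x,m,r) = |⋃_{j ≥ 0, |j−m| ≤ t} CV(X,x,j,r)|`. -/
def Ct {N d : ℕ} (X : Fin N → Pt d) (x : Pt d) (m : ℤ) (t : ℕ) (r : ℝ) : ℕ :=
  (CVUnion X x m t r).card

/-!
If record `i` is the same in both databases, a neighbor of `i` in one database that is not a
neighbor in the other must itself have changed, so the two degrees of `i` differ by at most the
Hamming distance `t`. Hence an unchanged record of `CV(X_t,x,k,r)` lies in the union for `X`, and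
only `t` records have changed.
-/

section

variable {N d : ℕ}

/-- The set of indices of the records in which two databases differ, whose cardinality is the
Hamming distance. -/
def differing (X X' : Fin N → Pt d) : Finset (Fin N) :=
  univ.filter fun i => X i ≠ X' i

/-- The neighborhood of record `i`, whose cardinality is the degree of `i`. Records are identified
by their index, so only `i` itself is excluded, not the records that coincide with it. -/
def neighbors (X : Fin N → Pt d) (r : ℝ) (i : Fin N) : Finset (Fin N) :=
  univ.filter fun j => j ≠ i ∧ ‖X j - X i‖ ≤ r

theorem mem_differing {X X' : Fin N → Pt d} {i : Fin N} : i ∈ differing X X' ↔ X i ≠ X' i :=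
  mem_filter_univ i

theorem mem_neighbors {X : Fin N → Pt d} {r : ℝ} {i j : Fin N} :
    j ∈ neighbors X r i ↔ j ≠ i ∧ ‖X j - X i‖ ≤ r :=
  mem_filter_univ j

theorem card_differing (X X' : Fin N → Pt d) : (differing X X').card = hamming X X' :=
  rfl

theorem card_neighbors (X : Fin N → Pt d) (r : ℝ) (i : Fin N) :
    (neighbors X r i).card = deg X r i :=
  rfl

theorem hamming_comm (X X' : Fin N → Pt d) : hamming X X' = hamming X' X := by
  simp only [hamming, ne_comm]

theorem neighbors_subset_neighbors_union_differing {X X' : Fin N → Pt d} (r : ℝ) {i : Fin N}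
    (hi : X i = X' i) : neighbors X' r i ⊆ neighbors X r i ∪ differing X X' := by
  intro j hj
  by_cases hXj : X j = X' j
  · exact mem_union_left _ (mem_neighbors.2 (by rwa [hXj, hi, ← mem_neighbors]))
  · exact mem_union_right _ (mem_differing.2 hXj)

theorem deg_le_deg_add_hamming {X X' : Fin N → Pt d} (r : ℝ) {i : Fin N} (hi : X i = X' i) :
    deg X' r i ≤ deg X r i + hamming X X' := by
  simp only [← card_neighbors, ← card_differing]
  exact (card_le_card (neighbors_subset_neighbors_union_differing r hi)).trans (card_union_le _ _)

theorem abs_deg_sub_deg_le_hamming {X X' : Fin N → Pt d} (r : ℝ) {i : Fin N} (hi : X i = X' i) :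
    |(deg X r i : ℤ) - deg X' r i| ≤ hamming X X' := by
  have hX' : deg X' r i ≤ deg X r i + hamming X X' := deg_le_deg_add_hamming r hi
  have hX : deg X r i ≤ deg X' r i + hamming X X' :=
    hamming_comm X' X ▸ deg_le_deg_add_hamming r hi.symm
  rw [abs_le]
  omega

theorem mem_CV {X : Fin N → Pt d} {x : Pt d} {m : ℤ} {r : ℝ} {i : Fin N} :
    i ∈ CV X x m r ↔ (deg X r i : ℤ) = m ∧ ‖X i - x‖ ≤ r := by
  simp only [CV, Vset, mem_filter, mem_univ, true_and]

theorem mem_CVUnion {X : Fin N → Pt d} {x : Pt d} {m : ℤ} {t : ℕ} {r : ℝ} {i : Fin N} :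
    i ∈ CVUnion X x m t r ↔ |(deg X r i : ℤ) - m| ≤ t ∧ ‖X i - x‖ ≤ r := by
  have hIcc : (deg X r i : ℤ) ∈ Icc (m - t) (m + t) ↔ |(deg X r i : ℤ) - m| ≤ t := by
    rw [abs_sub_comm, Set.mem_Icc_iff_abs_le, ← Finset.coe_Icc, mem_coe]
  rw [← hIcc, CVUnion, mem_biUnion]
  simp only [mem_CV, ← and_assoc, exists_and_right, exists_eq_right']

theorem CV_subset_CVUnion_union_differing (X X' : Fin N → Pt d) (x : Pt d) (m : ℤ) (r : ℝ) :
    CV X' x m r ⊆ CVUnion X x m (hamming X X') r ∪ differing X X' := by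
  intro i hi
  obtain ⟨rfl, hix⟩ := mem_CV.1 hi
  by_cases hXi : X i = X' i
  · exact mem_union_left _ (mem_CVUnion.2 ⟨abs_deg_sub_deg_le_hamming r hXi, by rwa [hXi]⟩)
  · exact mem_union_right _ (mem_differing.2 hXi)

end

/-- If `H(X,X_t) = t`, then `|CV(X_t,x,k,r)| ≤ |⋃_{j ≥ 0, |j−k| ≤ t} CV(X,x,j,r)| + t`. -/
theorem CV_card_le_of_hamming
    (d N k t : ℕ) (hd : 1 ≤ d) (hk : 1 ≤ k) (r : ℝ) (hr : 0 < r)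
    (X Xt : Fin N → Pt d) (hH : hamming X Xt = t) (x : Pt d) :
    (CV Xt x (k : ℤ) r).card ≤ Ct X x (k : ℤ) t r + t := by
  subst hH
  calc (CV Xt x (k : ℤ) r).card
      ≤ (CVUnion X x (k : ℤ) (hamming X Xt) r ∪ differing X Xt).card :=
        card_le_card (CV_subset_CVUnion_union_differing X Xt x k r)
    _ ≤ Ct X x (k : ℤ) (hamming X Xt) r + hamming X Xt := card_union_le _ _
end
end
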